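/- Monotonicity in the interval length: for every admissible choice of n≥2, α>0, β>0, M ∈ ℝ, the functions L ↦ μ_n(β,L,M), L ↦ μ(α,β,L,M) and L ↦ μ*(α,β,L,M) are nondecreasing on (0,+∞). Moreover, for every L > δ(n), μ*_n(β, L_{δ(n)}^*, M) ≤ μ*_n(β,L,M) + log(2M²+2)/log n + βM²δ(n)³/3, where L_{δ(n)}^* = δ(n)⌈L/δ(n)⌉. -/

import Mathlib

/-!
Every inequality compares two infima of nonnegative functionals by turning each competitor for the
right-hand side into a competitor for the left-hand side.

* For `μ_n` and `μ` a competitor on the longer interval is simply restricted to the shorter one.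
* For `μ*` restriction would spoil the boundary value at the right endpoint. Instead, with
  `k = L₂ / L₁ ≥ 1`, the graph of the competitor is contracted by the factor `k`. This preserves the
  forcing term `M x` and the number of jumps, and divides the fidelity term by `k³`.
* For `μ*_n` the value on the last cell is changed from `M L` to `M L^*`. Since `L^* - L ≤ δ`, only
  one discrete slope changes, by at most `|M|`, and `1 + (p + q)² ≤ (2 q² + 2) (1 + p²)`; as
  `δ / ω² = 1 / log n`, the logarithmic term grows by at most `log (2 M² + 2) / log n`. The fidelity
  term of the last cell becomes `∫₀^δ (M y)² dy = M² δ³ / 3`.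
-/

open MeasureTheory Filter Set

namespace PeronaMalik

/-- `a_{δ,*} = δ⌊a/δ⌋`, the lower `δ`-approximation of `a`. -/
noncomputable def lowGrid (δ a : ℝ) : ℝ := δ * (⌊a / δ⌋ : ℤ)

/-- `b_δ^* = δ⌈b/δ⌉`, the upper `δ`-approximation of `b`. -/
noncomputable def highGrid (δ b : ℝ) : ℝ := δ * (⌈b / δ⌉ : ℤ)

/-- `u` is piecewise constant at scale `δ`: constant on every interval `[zδ, (z+1)δ)`. -/
def IsPC (δ : ℝ) (u : ℝ → ℝ) : Prop :=
  ∀ z : ℤ, ∀ x ∈ Set.Ico ((z : ℝ) * δ) (((z : ℝ) + 1) * δ), u x = u ((z : ℝ) * δ)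

/-- Discrete derivative `D^δ u (x) = (u(x+δ) - u(x))/δ`. -/
noncomputable def Dd (δ : ℝ) (u : ℝ → ℝ) (x : ℝ) : ℝ := (u (x + δ) - u x) / δ

/-- The discrete Perona–Malik functional with fidelity term on `(a,b)`. -/
noncomputable def DPMF (n : ℕ) (β : ℝ) (f : ℝ → ℝ) (a b : ℝ) (u : ℝ → ℝ) : ℝ :=
  (∫ x in lowGrid (1 / (n : ℝ)) a..(highGrid (1 / (n : ℝ)) b - 1 / (n : ℝ)),
      Real.log (1 + (Dd (1 / (n : ℝ)) u x) ^ 2)) +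
    β * ∫ x in a..b, (u x - f x) ^ 2

/-- `u` is a minimizer of `DPMF n β f (0,1)` over `PC_{1/n}(0,1)`. -/
def IsMinimizer (n : ℕ) (β : ℝ) (f : ℝ → ℝ) (u : ℝ → ℝ) : Prop :=
  IsPC (1 / (n : ℝ)) u ∧
    ∀ v : ℝ → ℝ, IsPC (1 / (n : ℝ)) v → DPMF n β f 0 1 u ≤ DPMF n β f 0 1 v

/-- `m(n,β,f)`, the minimum value of the discrete Perona–Malik functional. -/
noncomputable def mval (n : ℕ) (β : ℝ) (f : ℝ → ℝ) : ℝ :=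
  sInf ((fun u => DPMF n β f 0 1 u) '' {u | IsPC (1 / (n : ℝ)) u})

/-- `ω(n) = (log n / n)^{1/3}`. -/
noncomputable def omg (n : ℕ) : ℝ := (Real.log n / n) ^ ((1 : ℝ) / 3)

/-- `δ(n) = 1/(n ω(n))`. -/
noncomputable def dlt (n : ℕ) : ℝ := 1 / ((n : ℝ) * omg n)

/-- The rescaled discrete Perona–Malik functional. -/
noncomputable def RDPM (n : ℕ) (a b : ℝ) (u : ℝ → ℝ) : ℝ :=
  (1 / omg n ^ 2) *
    ∫ x in lowGrid (dlt n) a..(highGrid (dlt n) b - dlt n),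
      Real.log (1 + (Dd (dlt n) u x) ^ 2)

/-- The rescaled discrete Perona–Malik functional with fidelity term. -/
noncomputable def RDPMF (n : ℕ) (β : ℝ) (f : ℝ → ℝ) (a b : ℝ) (u : ℝ → ℝ) : ℝ :=
  RDPM n a b u + β * ∫ x in Set.Ioo a b, (u x - f x) ^ 2

/-- `u` is a step function with finitely many jumps on `(a,b)`. -/
def IsStep (a b : ℝ) (u : ℝ → ℝ) : Prop :=
  ∃ (s : Finset ℝ) (c : ℝ) (J : ℝ → ℝ),
    (∀ p ∈ s, p ∈ Set.Ioo a b ∧ J p ≠ 0) ∧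
    ∀ x ∈ Set.Ioo a b, u x = c + ∑ p ∈ s, (if p ≤ x then J p else 0)

/-- The set of jump (discontinuity) points of `u` inside `(a,b)`. -/
def jumpSet (a b : ℝ) (u : ℝ → ℝ) : Set ℝ :=
  {x ∈ Set.Ioo a b | ¬ ContinuousAt u x}

/-- The limit functional `JF(α,β,f,(a,b),u) = α·#jumps + β∫(u-f)²`. -/
noncomputable def JF (α β : ℝ) (f : ℝ → ℝ) (a b : ℝ) (u : ℝ → ℝ) : ℝ :=
  α * ((jumpSet a b u).ncard : ℝ) + β * ∫ x in Set.Ioo a b, (u x - f x) ^ 2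

/-- Strict convergence in `BV((a,b))`: `L¹` convergence plus convergence of
total variations. -/
def StrictBV (useq : ℕ → ℝ → ℝ) (u : ℝ → ℝ) (a b : ℝ) : Prop :=
  Tendsto (fun k => ∫ x in Set.Ioo a b, |useq k x - u x|) atTop (nhds 0) ∧
  Tendsto (fun k => eVariationOn (useq k) (Set.Ioo a b)) atTop
    (nhds (eVariationOn u (Set.Ioo a b)))

/-- Locally strict convergence in `BV_loc(ℝ)`: strict convergence on every bounded
interval whose endpoints are not jump points of the limit. -/
def LocStrictBV (useq : ℕ → ℝ → ℝ) (u : ℝ → ℝ) : Prop :=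
  ∀ a b : ℝ, a < b → ContinuousAt u a → ContinuousAt u b → StrictBV useq u a b

/-- `S(x) = 2⌊(x+1)/2⌋`. -/
noncomputable def stairS (x : ℝ) : ℝ := 2 * (⌊(x + 1) / 2⌋ : ℤ)

/-- The canonical `(H,V)`-staircase `S_{H,V}(x) = V·S(x/H)`. -/
noncomputable def canStair (H V : ℝ) (x : ℝ) : ℝ := V * stairS (x / H)

/-- Oblique translations of the canonical `(H,V)`-staircase. -/
def Obl (H V : ℝ) (v : ℝ → ℝ) : Prop :=
  ∃ τ ∈ Set.Icc (-1 : ℝ) 1, ∀ x, v x = canStair H V (x - H * τ) + V * τ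

/-- Graph translations of horizontal type of the canonical `(H,V)`-staircase. -/
def Orz (H V : ℝ) (v : ℝ → ℝ) : Prop :=
  ∃ τ ∈ Set.Icc (-1 : ℝ) 1, ∀ x, v x = canStair H V (x - H * τ)

/-- `μ_n(β,L,M)`: minimum of the rescaled functional with affine forcing term. -/
noncomputable def muDisc (n : ℕ) (β L M : ℝ) : ℝ :=
  sInf ((fun u => RDPMF n β (fun x => M * x) 0 L u) '' {u | IsPC (dlt n) u})

/-- `μ*_n(β,L,M)`: same as `μ_n` but with boundary conditions `u(0)=0`, `u(L^*)=ML`. -/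
noncomputable def muDiscStar (n : ℕ) (β L M : ℝ) : ℝ :=
  sInf ((fun u => RDPMF n β (fun x => M * x) 0 L u) ''
    {u | IsPC (dlt n) u ∧ u 0 = 0 ∧ u (highGrid (dlt n) L - dlt n) = M * L})

/-- `μ(α,β,L,M)`: minimum of the limit functional with affine forcing term. -/
noncomputable def muLim (α β L M : ℝ) : ℝ :=
  sInf ((fun u => JF α β (fun x => M * x) 0 L u) '' {u | IsStep 0 L u})

/-- `μ*(α,β,L,M)`: same as `μ` but with boundary values `u(0⁺)=0`, `u(L⁻)=ML`. -/
noncomputable def muLimStar (α β L M : ℝ) : ℝ :=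
  sInf ((fun u => JF α β (fun x => M * x) 0 L u) ''
    {u | IsStep 0 L u ∧ Tendsto u (nhdsWithin 0 (Set.Ioi 0)) (nhds 0) ∧
         Tendsto u (nhdsWithin L (Set.Iio L)) (nhds (M * L))})

/-- `u` and `v` have the same boundary values `u(a⁺)=v(a⁺)`, `u(b⁻)=v(b⁻)`. -/
def SameBdry (a b : ℝ) (u v : ℝ → ℝ) : Prop :=
  (∀ c : ℝ, Tendsto v (nhdsWithin a (Set.Ioi a)) (nhds c) →
     Tendsto u (nhdsWithin a (Set.Ioi a)) (nhds c)) ∧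
  (∀ c : ℝ, Tendsto v (nhdsWithin b (Set.Iio b)) (nhds c) →
     Tendsto u (nhdsWithin b (Set.Iio b)) (nhds c))

/-- `v` is a local minimizer for `JF(α,β,f,(a,b),·)` among step functions with the
same boundary values. -/
def IsLocalMinJF (α β : ℝ) (f : ℝ → ℝ) (a b : ℝ) (v : ℝ → ℝ) : Prop :=
  IsStep a b v ∧
  ∀ u : ℝ → ℝ, IsStep a b u → SameBdry a b u v → JF α β f a b v ≤ JF α β f a b u

/-- `v` is an entire local minimizer for `JF(α,β,f,·,·)`. -/
def IsEntireLocalMinJF (α β : ℝ) (f : ℝ → ℝ) (v : ℝ → ℝ) : Prop :=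
  ∀ a b : ℝ, a < b → IsLocalMinJF α β f a b v

/-- `v` is a local minimizer for `RDPMF_n(β,f,(a,b),·)` among piecewise constant
functions with the same boundary values. -/
def IsLocalMinRDPMF (n : ℕ) (β : ℝ) (f : ℝ → ℝ) (a b : ℝ) (v : ℝ → ℝ) : Prop :=
  IsPC (dlt n) v ∧
  ∀ u : ℝ → ℝ, IsPC (dlt n) u →
    u (lowGrid (dlt n) a) = v (lowGrid (dlt n) a) →
    u (highGrid (dlt n) b - dlt n) = v (highGrid (dlt n) b - dlt n) →
    RDPMF n β f a b v ≤ RDPMF n β f a b u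

open scoped Topology

section Preliminaries

theorem sInf_image_le_add {ι κ R : Type*} [ConditionallyCompleteLattice R] [AddGroup R]
    [AddRightMono R] {A : Set ι} {B : Set κ} {F : ι → R} {G : κ → R} {C : R}
    (hF : BddBelow (F '' A)) (hB : B.Nonempty) (h : ∀ u ∈ B, ∃ v ∈ A, F v ≤ G u + C) :
    sInf (F '' A) ≤ sInf (G '' B) + C := by
  rw [← sub_le_iff_le_add]
  refine le_csInf (hB.image G) (forall_mem_image.2 fun u hu => sub_le_iff_le_add.2 ?_)
  obtain ⟨v, hv, hvu⟩ := h u hu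
  exact (csInf_le hF (mem_image_of_mem F hv)).trans hvu

theorem sInf_image_le_sInf_image {ι κ R : Type*} [ConditionallyCompleteLattice R]
    {A : Set ι} {B : Set κ} {F : ι → R} {G : κ → R}
    (hF : BddBelow (F '' A)) (hB : B.Nonempty) (h : ∀ u ∈ B, ∃ v ∈ A, F v ≤ G u) :
    sInf (F '' A) ≤ sInf (G '' B) := by
  refine le_csInf (hB.image G) (forall_mem_image.2 fun u hu => ?_)
  obtain ⟨v, hv, hvu⟩ := h u hu
  exact (csInf_le hF (mem_image_of_mem F hv)).trans hvu

theorem memLp_restrict_of_continuousOn_isCompact {X E : Type*} [TopologicalSpace X]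
    [MeasurableSpace X] [OpensMeasurableSpace X] [NormedAddCommGroup E] {μ : Measure X}
    [IsFiniteMeasureOnCompacts μ] {f : X → E} {K : Set X} (hf : ContinuousOn f K)
    (hK : IsCompact K) (hKm : MeasurableSet K) (p : ENNReal) : MemLp f p (μ.restrict K) := by
  obtain ⟨C, hC⟩ := hK.exists_bound_of_continuousOn hf
  have : IsFiniteMeasure (μ.restrict K) := ⟨by simpa using hK.measure_lt_top⟩
  exact MemLp.of_bound (hf.aestronglyMeasurable_of_isCompact hK hKm) C
    ((ae_restrict_iff' hKm).2 (.of_forall hC))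

theorem memLp_linear_restrict_Ioo (M : ℝ) (p : ENNReal) (a b : ℝ) :
    MemLp (fun x => M * x) p (volume.restrict (Ioo a b)) :=
  (memLp_restrict_of_continuousOn_isCompact (by fun_prop) isCompact_Icc measurableSet_Icc
    p).mono_measure (Measure.restrict_mono_set volume Ioo_subset_Icc_self)

end Preliminaries

/-! ### The fidelity term -/

section Fidelity

variable {f u v : ℝ → ℝ} {a b c d : ℝ}

/-- The fidelity term `∫_a^b (u - f)² dx` common to `RDPMF` and `JF`. -/
noncomputable def fidelity (f : ℝ → ℝ) (a b : ℝ) (u : ℝ → ℝ) : ℝ :=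
  ∫ x in Ioo a b, (u x - f x) ^ 2

theorem fidelity_nonneg (f : ℝ → ℝ) (a b : ℝ) (u : ℝ → ℝ) : 0 ≤ fidelity f a b u :=
  integral_nonneg fun _ => sq_nonneg _

theorem fidelity_congr (h : EqOn u v (Ioo a b)) : fidelity f a b u = fidelity f a b v :=
  setIntegral_congr_fun measurableSet_Ioo fun x hx => by simp only [h hx]

theorem fidelity_mono (huf : MemLp (u - f) 2 (volume.restrict (Ioo c d)))
    (h : Ioo a b ⊆ Ioo c d) : fidelity f a b u ≤ fidelity f c d u :=
  setIntegral_mono_set huf.integrable_sq (.of_forall fun _ => sq_nonneg _) h.eventuallyLE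

theorem fidelity_eq_intervalIntegral (f u : ℝ → ℝ) (hab : a ≤ b) :
    fidelity f a b u = ∫ x in a..b, (u x - f x) ^ 2 := by
  rw [intervalIntegral.integral_of_le hab, integral_Ioc_eq_integral_Ioo, fidelity]

theorem fidelity_add_fidelity (huf : MemLp (u - f) 2 (volume.restrict (Ioo a c)))
    (hab : a ≤ b) (hbc : b ≤ c) : fidelity f a b u + fidelity f b c u = fidelity f a c u := by
  have hint : IntervalIntegrable (fun x => (u x - f x) ^ 2) volume a c :=
    (intervalIntegrable_iff_integrableOn_Ioo_of_le (hab.trans hbc)).2 huf.integrable_sq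
  have hb : b ∈ uIcc a c := by rw [uIcc_of_le (hab.trans hbc)]; exact ⟨hab, hbc⟩
  simp only [fidelity_eq_intervalIntegral f u, hab, hbc, hab.trans hbc]
  exact intervalIntegral.integral_add_adjacent_intervals
    (hint.mono_set (uIcc_subset_uIcc_left hb)) (hint.mono_set (uIcc_subset_uIcc_right hb))

theorem fidelity_linear_const (M : ℝ) (hab : a ≤ b) :
    fidelity (fun x => M * x) a b (fun _ => M * b) = M ^ 2 * (b - a) ^ 3 / 3 := by
  calc fidelity (fun x => M * x) a b (fun _ => M * b)
      = ∫ x in a..b, M ^ 2 * (b - x) ^ 2 := by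
        rw [fidelity_eq_intervalIntegral _ _ hab]
        congr 1 with x
        ring
    _ = M ^ 2 * ∫ y in (0 : ℝ)..(b - a), y ^ 2 := by
        rw [intervalIntegral.integral_const_mul,
          intervalIntegral.integral_comp_sub_left (fun y => y ^ 2), sub_self]
    _ = M ^ 2 * (b - a) ^ 3 / 3 := by
        rw [integral_pow]
        norm_num
        ring

end Fidelity

/-! ### Contraction of the graph -/

section Contract

variable {f u : ℝ → ℝ} {a b c k : ℝ}

/-- The function whose graph is the graph of `u` contracted by the factor `k` about the origin. -/
noncomputable def contract (k : ℝ) (u : ℝ → ℝ) (x : ℝ) : ℝ := u (k * x) / k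

theorem contract_linear (hk : k ≠ 0) (M : ℝ) : contract k (fun x => M * x) = fun x => M * x := by
  ext x
  rw [contract]
  field_simp

theorem tendsto_contract {s t : Set ℝ} (hst : MapsTo (k * ·) s t)
    (hu : Tendsto u (𝓝[t] (k * a)) (𝓝 c)) : Tendsto (contract k u) (𝓝[s] a) (𝓝 (c / k)) :=
  (hu.comp ((continuous_const_mul k).continuousWithinAt.tendsto_nhdsWithin hst)).div_const k

theorem tendsto_contract_nhdsGT (hk : 0 < k) (hu : Tendsto u (𝓝[>] (k * a)) (𝓝 c)) :
    Tendsto (contract k u) (𝓝[>] a) (𝓝 (c / k)) :=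
  tendsto_contract (t := Ioi (k * a)) (fun x (hx : a < x) => mul_lt_mul_of_pos_left hx hk) hu

theorem tendsto_contract_nhdsLT (hk : 0 < k) (hu : Tendsto u (𝓝[<] (k * a)) (𝓝 c)) :
    Tendsto (contract k u) (𝓝[<] a) (𝓝 (c / k)) :=
  tendsto_contract (t := Iio (k * a)) (fun x (hx : x < a) => mul_lt_mul_of_pos_left hx hk) hu

theorem continuousAt_contract_iff (hk : k ≠ 0) {x : ℝ} :
    ContinuousAt (contract k u) x ↔ ContinuousAt u (k * x) :=
  ((Homeomorph.mulRight₀ k⁻¹ (inv_ne_zero hk)).comp_continuousAt_iff _ x).trans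
    ((Homeomorph.mulLeft₀ k hk).comp_continuousAt_iff' u x)

theorem jumpSet_contract (hk : 0 < k) :
    jumpSet a b (contract k u) = (k * ·) ⁻¹' jumpSet (k * a) (k * b) u := by
  ext x
  simp [jumpSet, continuousAt_contract_iff hk.ne', hk]

theorem ncard_jumpSet_contract (hk : 0 < k) :
    (jumpSet a b (contract k u)).ncard = (jumpSet (k * a) (k * b) u).ncard := by
  rw [jumpSet_contract hk]
  exact ncard_preimage_of_injective_subset_range (mul_right_injective₀ hk.ne')
    fun y _ => (mul_left_surjective₀ hk.ne') y

theorem fidelity_contract (hk : 0 < k) (hab : a ≤ b) :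
    fidelity (contract k f) a b (contract k u) = (k ^ 3)⁻¹ * fidelity f (k * a) (k * b) u := by
  rw [fidelity_eq_intervalIntegral _ _ hab,
    fidelity_eq_intervalIntegral _ _ (mul_le_mul_of_nonneg_left hab hk.le)]
  calc ∫ x in a..b, (contract k u x - contract k f x) ^ 2
      = ∫ x in a..b, (k ^ 2)⁻¹ * (u (k * x) - f (k * x)) ^ 2 := by
        congr 1 with x
        rw [contract, contract]
        field_simp
    _ = (k ^ 3)⁻¹ * ∫ y in k * a..k * b, (u y - f y) ^ 2 := by
        rw [intervalIntegral.integral_const_mul,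
          intervalIntegral.integral_comp_mul_left (fun y => (u y - f y) ^ 2) hk.ne', smul_eq_mul]
        ring

theorem JF_contract_le {α β : ℝ} (hβ : 0 ≤ β) (hk : 1 ≤ k) (hab : a ≤ b) :
    JF α β (contract k f) a b (contract k u) ≤ JF α β f (k * a) (k * b) u := by
  have hk0 : 0 < k := by linarith
  have hfid : fidelity (contract k f) a b (contract k u) ≤ fidelity f (k * a) (k * b) u := by
    rw [fidelity_contract hk0 hab]
    exact mul_le_of_le_one_left (fidelity_nonneg _ _ _ _) (inv_le_one_of_one_le₀ (one_le_pow₀ hk))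
  unfold JF
  rw [ncard_jumpSet_contract hk0]
  exact add_le_add_right (mul_le_mul_of_nonneg_left hfid hβ) _

end Contract

/-! ### Step functions and the limit functional -/

section Step

variable {u : ℝ → ℝ} {a b c d k : ℝ}

theorem isStep_of_eq_add_sum (s : Finset ℝ) (c : ℝ) (J : ℝ → ℝ)
    (h : ∀ x ∈ Ioo a b, u x = c + ∑ p ∈ s, if p ≤ x then J p else 0) : IsStep a b u := by
  -- Jumps at points `p ≤ a` are absorbed into the constant, and those at `p ≥ b` are discarded.
  refine ⟨{p ∈ s | p ∈ Ioo a b ∧ J p ≠ 0}, c + ∑ p ∈ s, if p ≤ a then J p else 0, J,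
    fun p hp => (Finset.mem_filter.1 hp).2, fun x hx => ?_⟩
  rw [h x hx, Finset.sum_filter, add_assoc, ← Finset.sum_add_distrib]
  congr 1
  refine Finset.sum_congr rfl fun p _ => ?_
  have := hx.1
  have := hx.2
  grind

theorem IsStep.mono (hu : IsStep c d u) (h : Ioo a b ⊆ Ioo c d) : IsStep a b u := by
  obtain ⟨s, e, J, -, hu⟩ := hu
  exact isStep_of_eq_add_sum s e J fun x hx => hu x (h hx)

theorem isStep_const (a b c : ℝ) : IsStep a b fun _ => c :=
  isStep_of_eq_add_sum ∅ c 0 (by simp)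

theorem exists_isStep_tendsto (hab : a < b) (c d : ℝ) :
    ∃ u, IsStep a b u ∧ Tendsto u (𝓝[>] a) (𝓝 c) ∧ Tendsto u (𝓝[<] b) (𝓝 d) := by
  obtain ⟨p, hap, hpb⟩ := exists_between hab
  refine ⟨fun x => c + if p ≤ x then d - c else 0,
    isStep_of_eq_add_sum {p} c (fun _ => d - c) (by simp), ?_, ?_⟩
  · refine tendsto_const_nhds.congr' ?_
    filter_upwards [nhdsWithin_le_nhds (eventually_lt_nhds hap)] with x hx
    simp [hx.not_ge]
  · refine tendsto_const_nhds.congr' ?_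
    filter_upwards [nhdsWithin_le_nhds (eventually_gt_nhds hpb)] with x hx
    simp [hx.le]

theorem isStep_contract (hk : 0 < k) (hu : IsStep (k * a) (k * b) u) :
    IsStep a b (contract k u) := by
  obtain ⟨s, c, J, -, h⟩ := hu
  refine isStep_of_eq_add_sum (s.image (· / k)) (c / k) (fun q => J (k * q) / k) fun x hx => ?_
  have hkx : k * x ∈ Ioo (k * a) (k * b) :=
    ⟨mul_lt_mul_of_pos_left hx.1 hk, mul_lt_mul_of_pos_left hx.2 hk⟩
  rw [contract, h _ hkx, Finset.sum_image (fun p _ q _ => (div_left_inj' hk.ne').1), add_div,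
    Finset.sum_div]
  congr 1
  refine Finset.sum_congr rfl fun p _ => ?_
  rw [mul_div_cancel₀ _ hk.ne', ite_div, zero_div]
  simp only [div_le_iff₀' hk]

theorem IsStep.memLp (hu : IsStep a b u) (p : ENNReal) : MemLp u p (volume.restrict (Ioo a b)) := by
  obtain ⟨s, c, J, -, h⟩ := hu
  have hsum : MemLp (fun x => c + ∑ q ∈ s, (Ici q).indicator (fun _ => J q) x) p
      (volume.restrict (Ioo a b)) :=
    (memLp_const c).add
      (memLp_finsetSum s fun q _ => (memLp_const (J q)).indicator measurableSet_Ici)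
  refine hsum.ae_eq ((ae_restrict_iff' measurableSet_Ioo).2 (.of_forall fun x hx => ?_))
  simp only [h x hx, indicator_apply, mem_Ici]

theorem continuousAt_ite_le {p x : ℝ} (h : p ≠ x) (y z : ℝ) :
    ContinuousAt (fun t => if p ≤ t then y else z) x := by
  rcases h.lt_or_gt with hpx | hxp
  · refine continuousAt_const.congr (f := fun _ => y) ?_
    filter_upwards [eventually_gt_nhds hpx] with t ht using (if_pos ht.le).symm
  · refine continuousAt_const.congr (f := fun _ => z) ?_
    filter_upwards [eventually_lt_nhds hxp] with t ht using (if_neg ht.not_ge).symm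

theorem IsStep.finite_jumpSet (hu : IsStep a b u) : (jumpSet a b u).Finite := by
  obtain ⟨s, c, J, -, h⟩ := hu
  refine s.finite_toSet.subset fun x ⟨hx, hux⟩ => ?_
  by_contra hxs
  refine hux (ContinuousAt.congr (f := fun x => c + ∑ p ∈ s, if p ≤ x then J p else 0) ?_ ?_)
  · exact continuousAt_const.add (tendsto_finsetSum s fun p hp =>
      continuousAt_ite_le (ne_of_mem_of_not_mem hp hxs) (J p) 0)
  · filter_upwards [Ioo_mem_nhds hx.1 hx.2] with y hy using (h y hy).symm

theorem JF_nonneg {α β : ℝ} (hα : 0 ≤ α) (hβ : 0 ≤ β) (f : ℝ → ℝ) (a b : ℝ) (u : ℝ → ℝ) :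
    0 ≤ JF α β f a b u :=
  add_nonneg (mul_nonneg hα (Nat.cast_nonneg _)) (mul_nonneg hβ (fidelity_nonneg f a b u))

theorem bddBelow_image_JF {α β : ℝ} (hα : 0 ≤ α) (hβ : 0 ≤ β) (f : ℝ → ℝ) (a b : ℝ)
    (A : Set (ℝ → ℝ)) : BddBelow (JF α β f a b '' A) :=
  ⟨0, forall_mem_image.2 fun u _ => JF_nonneg hα hβ f a b u⟩

theorem IsStep.JF_mono {α β : ℝ} {f : ℝ → ℝ} (hα : 0 ≤ α) (hβ : 0 ≤ β) (hu : IsStep c d u)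
    (hf : MemLp f 2 (volume.restrict (Ioo c d))) (h : Ioo a b ⊆ Ioo c d) :
    JF α β f a b u ≤ JF α β f c d u := by
  have hjump : (jumpSet a b u).ncard ≤ (jumpSet c d u).ncard :=
    ncard_le_ncard (fun x hx => ⟨h hx.1, hx.2⟩) hu.finite_jumpSet
  have hfid : fidelity f a b u ≤ fidelity f c d u := fidelity_mono ((hu.memLp 2).sub hf) h
  exact add_le_add (by gcongr) (mul_le_mul_of_nonneg_left hfid hβ)

theorem monotone_muLim {α β : ℝ} (hα : 0 ≤ α) (hβ : 0 ≤ β) (M : ℝ) :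
    Monotone fun L => muLim α β L M := by
  intro L₁ L₂ hL
  have hsub : Ioo 0 L₁ ⊆ Ioo 0 L₂ := Ioo_subset_Ioo_right hL
  refine sInf_image_le_sInf_image (bddBelow_image_JF hα hβ _ _ _ _) ⟨_, isStep_const 0 L₂ 0⟩
    fun u hu => ⟨u, IsStep.mono hu hsub, ?_⟩
  exact hu.JF_mono hα hβ (memLp_linear_restrict_Ioo M 2 _ _) hsub

theorem monotoneOn_muLimStar {α β : ℝ} (hα : 0 ≤ α) (hβ : 0 ≤ β) (M : ℝ) :
    MonotoneOn (fun L => muLimStar α β L M) (Ioi 0) := by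
  intro L₁ (hL₁ : 0 < L₁) L₂ hL₂ hL
  obtain ⟨k, hk, rfl⟩ : ∃ k, 1 ≤ k ∧ L₂ = k * L₁ :=
    ⟨L₂ / L₁, (one_le_div hL₁).2 hL, by field_simp⟩
  have hk0 : 0 < k := by linarith
  refine sInf_image_le_sInf_image (bddBelow_image_JF hα hβ _ _ _ _)
    (exists_isStep_tendsto hL₂ 0 (M * (k * L₁))) ?_
  rintro u ⟨hu, hu_left, hu_right⟩
  refine ⟨contract k u, ⟨isStep_contract hk0 (by simpa using hu), ?_, ?_⟩, ?_⟩
  · simpa using tendsto_contract_nhdsGT (a := 0) (c := 0) hk0 (by simpa using hu_left)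
  · rw [show M * L₁ = M * (k * L₁) / k by field_simp]
    exact tendsto_contract_nhdsLT hk0 hu_right
  · simpa [contract_linear hk0.ne'] using
      JF_contract_le (α := α) (f := fun x => M * x) (u := u) hβ hk hL₁.le

end Step

/-! ### The grid -/

section Grid

variable {δ a b : ℝ}

theorem lowGrid_zero (δ : ℝ) : lowGrid δ 0 = 0 := by simp [lowGrid]

theorem lowGrid_self (hδ : δ ≠ 0) : lowGrid δ δ = δ := by simp [lowGrid, hδ]

theorem lowGrid_mono (hδ : 0 ≤ δ) : Monotone (lowGrid δ) := fun a b hab => by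
  unfold lowGrid
  gcongr

theorem highGrid_mono (hδ : 0 ≤ δ) : Monotone (highGrid δ) := fun a b hab => by
  unfold highGrid
  gcongr

theorem le_highGrid (hδ : 0 < δ) (b : ℝ) : b ≤ highGrid δ b :=
  (div_le_iff₀' hδ).1 (Int.le_ceil _)

theorem highGrid_sub_lt (hδ : 0 < δ) (b : ℝ) : highGrid δ b - δ < b := by
  have : (⌈b / δ⌉ : ℝ) - 1 < b / δ := by linarith [Int.ceil_lt_add_one (b / δ)]
  calc highGrid δ b - δ = δ * (⌈b / δ⌉ - 1) := by rw [highGrid]; ring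
    _ < b := (lt_div_iff₀' hδ).1 this

theorem highGrid_highGrid (hδ : δ ≠ 0) (b : ℝ) : highGrid δ (highGrid δ b) = highGrid δ b := by
  simp [highGrid, hδ]

theorem exists_highGrid_sub_eq (δ b : ℝ) : ∃ k : ℤ, highGrid δ b - δ = k * δ :=
  ⟨⌈b / δ⌉ - 1, by rw [highGrid]; push_cast; ring⟩

theorem lowGrid_le_highGrid_sub (hδ : 0 < δ) (hab : a < b) :
    lowGrid δ a ≤ highGrid δ b - δ := by
  have : (⌊a / δ⌋ : ℝ) + 1 ≤ ⌈b / δ⌉ := by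
    exact_mod_cast Int.floor_lt_ceil_of_lt (div_lt_div_of_pos_right hab hδ)
  unfold lowGrid highGrid
  nlinarith

theorem le_highGrid_sub_of_lt (hδ : 0 < δ) (hb : δ < b) : δ ≤ highGrid δ b - δ := by
  simpa only [lowGrid_self hδ.ne'] using lowGrid_le_highGrid_sub hδ hb

end Grid

section PiecewiseConstant

variable {δ : ℝ} {u : ℝ → ℝ}

theorem isPC_const (δ c : ℝ) : IsPC δ fun _ => c := fun _ _ _ => rfl

theorem IsPC.eq_floor (hu : IsPC δ u) (hδ : 0 < δ) (x : ℝ) : u x = u (⌊x / δ⌋ * δ) :=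
  hu ⌊x / δ⌋ x ⟨(le_div_iff₀ hδ).1 (Int.floor_le _), (div_lt_iff₀ hδ).1 (Int.lt_floor_add_one _)⟩

theorem IsPC.measurable (hu : IsPC δ u) (hδ : 0 < δ) : Measurable u := by
  have : u = (fun z : ℤ => u (z * δ)) ∘ fun x => ⌊x / δ⌋ := funext (hu.eq_floor hδ)
  rw [this]
  exact Measurable.of_discrete.comp (by fun_prop)

theorem IsPC.exists_abs_le (hu : IsPC δ u) (hδ : 0 < δ) (a b : ℝ) :
    ∃ C, ∀ x ∈ Icc a b, |u x| ≤ C := by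
  obtain ⟨C, hC⟩ := ((finite_Icc ⌊a / δ⌋ ⌊b / δ⌋).image fun z : ℤ => |u (z * δ)|).bddAbove
  refine ⟨C, fun x hx => ?_⟩
  rw [hu.eq_floor hδ x]
  exact hC (mem_image_of_mem (fun z : ℤ => |u (z * δ)|)
    ⟨Int.floor_mono (div_le_div_of_nonneg_right hx.1 hδ.le),
      Int.floor_mono (div_le_div_of_nonneg_right hx.2 hδ.le)⟩)

theorem IsPC.memLp_Icc (hu : IsPC δ u) (hδ : 0 < δ) (p : ENNReal) (a b : ℝ) :
    MemLp u p (volume.restrict (Icc a b)) := by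
  obtain ⟨C, hC⟩ := hu.exists_abs_le hδ a b
  exact MemLp.of_bound (hu.measurable hδ).aestronglyMeasurable C
    ((ae_restrict_iff' measurableSet_Icc).2 (.of_forall hC))

theorem IsPC.memLp_Ioo (hu : IsPC δ u) (hδ : 0 < δ) (p : ENNReal) (a b : ℝ) :
    MemLp u p (volume.restrict (Ioo a b)) :=
  (hu.memLp_Icc hδ p a b).mono_measure (Measure.restrict_mono_set volume Ioo_subset_Icc_self)

theorem IsPC.intervalIntegrable (hu : IsPC δ u) (hδ : 0 < δ) (a b : ℝ) :
    IntervalIntegrable u volume a b := by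
  have : IntegrableOn u (uIcc a b) := memLp_one_iff_integrable.1 (hu.memLp_Icc hδ 1 _ _)
  exact this.intervalIntegrable

theorem IsPC.comp_add_self (hu : IsPC δ u) : IsPC δ fun x => u (x + δ) := by
  intro z x hx
  have := hu (z + 1) (x + δ) ⟨by push_cast; linarith [hx.1], by push_cast; linarith [hx.2]⟩
  push_cast at this
  simpa [add_mul] using this

theorem IsPC.log_Dd (hu : IsPC δ u) : IsPC δ fun x => Real.log (1 + Dd δ u x ^ 2) := by
  intro z x hx
  simp only [Dd, hu z x hx, hu.comp_add_self z x hx]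

end PiecewiseConstant

/-! ### The logarithmic energy of the discrete slopes -/

section SlopeEnergy

variable {δ a b c d : ℝ} {u : ℝ → ℝ}

/-- The Perona–Malik energy `∫_a^b log (1 + (D^δ u)²) dx` of the slopes of `u` at scale `δ`, of
which `RDPM` is a rescaling. -/
noncomputable def slopeEnergy (δ a b : ℝ) (u : ℝ → ℝ) : ℝ :=
  ∫ x in a..b, Real.log (1 + Dd δ u x ^ 2)

theorem log_one_add_sq_nonneg (x : ℝ) : 0 ≤ Real.log (1 + x ^ 2) :=
  Real.log_nonneg (by nlinarith [sq_nonneg x])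

theorem slopeEnergy_nonneg (δ : ℝ) (hab : a ≤ b) (u : ℝ → ℝ) : 0 ≤ slopeEnergy δ a b u :=
  intervalIntegral.integral_nonneg hab fun _ _ => log_one_add_sq_nonneg _

theorem IsPC.slopeEnergy_mono (hu : IsPC δ u) (hδ : 0 < δ) (hca : c ≤ a) (hab : a ≤ b)
    (hbd : b ≤ d) : slopeEnergy δ a b u ≤ slopeEnergy δ c d u :=
  intervalIntegral.integral_mono_interval hca hab hbd
    (.of_forall fun _ => log_one_add_sq_nonneg _) (hu.log_Dd.intervalIntegrable hδ c d)

theorem log_one_add_add_sq_le (p q : ℝ) :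
    Real.log (1 + (p + q) ^ 2) ≤ Real.log (1 + p ^ 2) + Real.log (2 * q ^ 2 + 2) := by
  rw [← Real.log_mul (by positivity) (by positivity)]
  exact Real.log_le_log (by positivity)
    (by nlinarith [sq_nonneg (p - q), mul_nonneg (sq_nonneg p) (sq_nonneg q)])

end SlopeEnergy

section Overwrite

variable {f u : ℝ → ℝ} {δ a b c d x : ℝ}

/-- The function equal to `u` on `(-∞, a)` and to the constant `c` on `[a, ∞)`. With `a` a grid
point, it serves to change the boundary value of a competitor at the right endpoint. -/
noncomputable def overwriteFrom (a c : ℝ) (u : ℝ → ℝ) (x : ℝ) : ℝ := if x < a then u x else c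

theorem overwriteFrom_of_lt (hx : x < a) (c : ℝ) (u : ℝ → ℝ) : overwriteFrom a c u x = u x :=
  if_pos hx

theorem overwriteFrom_of_le (hx : a ≤ x) (c : ℝ) (u : ℝ → ℝ) : overwriteFrom a c u x = c :=
  if_neg hx.not_gt

theorem isPC_overwriteFrom (hu : IsPC δ u) (hδ : 0 ≤ δ) (k : ℤ) (c : ℝ) :
    IsPC δ (overwriteFrom (k * δ) c u) := by
  intro z x hx
  rcases lt_or_ge z k with hzk | hkz
  · have hz : ((z : ℝ) + 1) * δ ≤ k * δ :=
      mul_le_mul_of_nonneg_right (by exact_mod_cast hzk) hδ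
    rw [overwriteFrom_of_lt (hx.2.trans_le hz),
      overwriteFrom_of_lt ((hx.1.trans_lt hx.2).trans_le hz), hu z x hx]
  · have hz : (k : ℝ) * δ ≤ z * δ := mul_le_mul_of_nonneg_right (by exact_mod_cast hkz) hδ
    rw [overwriteFrom_of_le (hz.trans hx.1), overwriteFrom_of_le hz]

theorem Dd_overwriteFrom_of_add_lt (hδ : 0 ≤ δ) (hx : x + δ < a) (c : ℝ) (u : ℝ → ℝ) :
    Dd δ (overwriteFrom a c u) x = Dd δ u x := by
  rw [Dd, Dd, overwriteFrom_of_lt hx, overwriteFrom_of_lt (by linarith)]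

theorem IsPC.Dd_overwriteFrom (hu : IsPC δ u) {k : ℤ} (hx : x ∈ Ico (k * δ - δ) (k * δ)) (c : ℝ) :
    Dd δ (overwriteFrom (k * δ) c u) x = Dd δ u x + (c - u (k * δ)) / δ := by
  have hxδ : u (x + δ) = u (k * δ) := hu k (x + δ) ⟨by linarith [hx.1], by linarith [hx.2]⟩
  rw [Dd, Dd, overwriteFrom_of_lt hx.2, overwriteFrom_of_le (by linarith [hx.1]), hxδ]
  ring

theorem IsPC.slopeEnergy_overwriteFrom_le (hu : IsPC δ u) (hδ : 0 < δ) {k : ℤ}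
    (hb : b ≤ k * δ - δ) (c : ℝ) :
    slopeEnergy δ b (k * δ) (overwriteFrom (k * δ) c u) ≤
      slopeEnergy δ b (k * δ) u + δ * Real.log (2 * ((c - u (k * δ)) / δ) ^ 2 + 2) := by
  set a : ℝ := k * δ
  set v := overwriteFrom a c u
  set C := Real.log (2 * ((c - u a) / δ) ^ 2 + 2)
  have hu_int := hu.log_Dd.intervalIntegrable hδ
  have hv_int := (isPC_overwriteFrom hu hδ.le k c).log_Dd.intervalIntegrable hδ
  have hleft : slopeEnergy δ b (a - δ) v ≤ slopeEnergy δ b (a - δ) u := by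
    refine intervalIntegral.integral_mono_on_of_le_Ioo hb (hv_int _ _) (hu_int _ _) fun x hx => ?_
    rw [Dd_overwriteFrom_of_add_lt hδ.le (lt_sub_iff_add_lt.1 hx.2)]
  have hlast : slopeEnergy δ (a - δ) a v ≤ slopeEnergy δ (a - δ) a u + δ * C := by
    calc slopeEnergy δ (a - δ) a v
        ≤ ∫ x in (a - δ)..a, (Real.log (1 + Dd δ u x ^ 2) + C) := by
          refine intervalIntegral.integral_mono_on_of_le_Ioo (by linarith) (hv_int _ _)
            ((hu_int _ _).add intervalIntegrable_const) fun x hx => ?_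
          rw [hu.Dd_overwriteFrom (Ioo_subset_Ico_self hx)]
          exact log_one_add_add_sq_le _ _
      _ = slopeEnergy δ (a - δ) a u + δ * C := by
          rw [intervalIntegral.integral_add (hu_int _ _) intervalIntegrable_const,
            intervalIntegral.integral_const, smul_eq_mul, sub_sub_cancel, slopeEnergy]
  have hu_split : slopeEnergy δ b (a - δ) u + slopeEnergy δ (a - δ) a u = slopeEnergy δ b a u :=
    intervalIntegral.integral_add_adjacent_intervals (hu_int _ _) (hu_int _ _)
  have hv_split : slopeEnergy δ b (a - δ) v + slopeEnergy δ (a - δ) a v = slopeEnergy δ b a v :=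
    intervalIntegral.integral_add_adjacent_intervals (hv_int _ _) (hv_int _ _)
  linarith

theorem fidelity_overwriteFrom
    (h : MemLp (overwriteFrom b d u - f) 2 (volume.restrict (Ioo a c))) (hab : a ≤ b)
    (hbc : b ≤ c) :
    fidelity f a c (overwriteFrom b d u) = fidelity f a b u + fidelity f b c fun _ => d := by
  have hleft : EqOn (overwriteFrom b d u) u (Ioo a b) := fun x hx => overwriteFrom_of_lt hx.2 d u
  have hright : EqOn (overwriteFrom b d u) (fun _ => d) (Ioo b c) :=
    fun x hx => overwriteFrom_of_le hx.1.le d u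
  rw [← fidelity_add_fidelity h hab hbc, fidelity_congr hleft, fidelity_congr hright]

end Overwrite

section RaiseLastCell

variable {u : ℝ → ℝ} {δ a b M L : ℝ}

/-- The competitor for `μ*_n` on `(0, L^*)` obtained from a competitor `u` on `(0, L)`: the value of
`u` on the last cell `[L^* - δ, L^*)` is replaced by `M L^*`. -/
noncomputable def raiseLastCell (δ M L : ℝ) (u : ℝ → ℝ) : ℝ → ℝ :=
  overwriteFrom (highGrid δ L - δ) (M * highGrid δ L) u

theorem isPC_overwriteFrom_highGrid_sub (hu : IsPC δ u) (hδ : 0 ≤ δ) (L c : ℝ) :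
    IsPC δ (overwriteFrom (highGrid δ L - δ) c u) := by
  obtain ⟨k, hk⟩ := exists_highGrid_sub_eq δ L
  exact hk ▸ isPC_overwriteFrom hu hδ k c

theorem slopeEnergy_raiseLastCell_le (hu : IsPC δ u) (hδ : 0 < δ)
    (hb : b ≤ highGrid δ L - δ - δ) (huL : u (highGrid δ L - δ) = M * L) :
    slopeEnergy δ b (highGrid δ L - δ) (raiseLastCell δ M L u) ≤
      slopeEnergy δ b (highGrid δ L - δ) u + δ * Real.log (2 * M ^ 2 + 2) := by
  have hle := le_highGrid hδ L
  have hlt := highGrid_sub_lt hδ L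
  have hslope : ((M * highGrid δ L - u (highGrid δ L - δ)) / δ) ^ 2 ≤ M ^ 2 := by
    calc ((M * highGrid δ L - u (highGrid δ L - δ)) / δ) ^ 2
        = M ^ 2 * ((highGrid δ L - L) / δ) ^ 2 := by rw [huL]; ring
      _ ≤ M ^ 2 * 1 := by
        gcongr
        exact pow_le_one₀ (div_nonneg (by linarith) hδ.le) ((div_le_one hδ).2 (by linarith))
      _ = M ^ 2 := mul_one _
  obtain ⟨k, hk⟩ := exists_highGrid_sub_eq δ L
  rw [raiseLastCell]
  rw [hk] at hb hslope ⊢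
  refine (hu.slopeEnergy_overwriteFrom_le hδ hb _).trans ?_
  gcongr

theorem fidelity_raiseLastCell_le (hu : IsPC δ u) (hδ : 0 < δ) (ha : a ≤ highGrid δ L - δ) (M : ℝ) :
    fidelity (fun x => M * x) a (highGrid δ L) (raiseLastCell δ M L u) ≤
      fidelity (fun x => M * x) a L u + M ^ 2 * δ ^ 3 / 3 := by
  have hf := memLp_linear_restrict_Ioo M 2 a
  have hv : MemLp (raiseLastCell δ M L u) 2 (volume.restrict (Ioo a (highGrid δ L))) :=
    (isPC_overwriteFrom_highGrid_sub hu hδ.le L _).memLp_Ioo hδ 2 a _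
  have hmono : fidelity (fun x => M * x) a (highGrid δ L - δ) u ≤ fidelity (fun x => M * x) a L u :=
    fidelity_mono ((hu.memLp_Ioo hδ 2 a L).sub (hf L))
      (Ioo_subset_Ioo_right (highGrid_sub_lt hδ L).le)
  have hlast : fidelity (fun x => M * x) (highGrid δ L - δ) (highGrid δ L)
      (fun _ => M * highGrid δ L) = M ^ 2 * δ ^ 3 / 3 := by
    rw [fidelity_linear_const M (by linarith), sub_sub_cancel]
  rw [raiseLastCell, fidelity_overwriteFrom (hv.sub (hf _)) ha (by linarith), hlast]
  linarith

end RaiseLastCell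

/-! ### The rescaled discrete functional -/

section Discrete

variable {n : ℕ} {β a b c d L M : ℝ} {f u : ℝ → ℝ}

theorem omg_pos (hn : 2 ≤ n) : 0 < omg n := by
  have hn1 : (1 : ℝ) < n := by exact_mod_cast hn
  exact Real.rpow_pos_of_pos (div_pos (Real.log_pos hn1) (by linarith)) _

theorem dlt_pos (hn : 2 ≤ n) : 0 < dlt n :=
  one_div_pos.2 (mul_pos (by positivity) (omg_pos hn))

theorem omg_pow_three (n : ℕ) : omg n ^ 3 = Real.log n / n := by
  have : 0 ≤ Real.log n / n := div_nonneg (Real.log_natCast_nonneg n) n.cast_nonneg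
  rw [omg, ← Real.rpow_natCast, ← Real.rpow_mul this]
  norm_num

theorem dlt_div_omg_sq (n : ℕ) : dlt n / omg n ^ 2 = 1 / Real.log n := by
  rcases eq_or_ne n 0 with rfl | hn
  · simp [dlt]
  · have hn0 : (n : ℝ) ≠ 0 := by exact_mod_cast hn
    calc dlt n / omg n ^ 2 = 1 / (n * omg n ^ 3) := by rw [dlt, div_div]; ring
      _ = 1 / Real.log n := by rw [omg_pow_three, mul_div_cancel₀ _ hn0]

theorem RDPMF_eq (n : ℕ) (β : ℝ) (f : ℝ → ℝ) (a b : ℝ) (u : ℝ → ℝ) :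
    RDPMF n β f a b u =
      1 / omg n ^ 2 * slopeEnergy (dlt n) (lowGrid (dlt n) a) (highGrid (dlt n) b - dlt n) u +
        β * fidelity f a b u :=
  rfl

theorem RDPMF_nonneg (hn : 2 ≤ n) (hβ : 0 ≤ β) (f : ℝ → ℝ) (hab : a < b) (u : ℝ → ℝ) :
    0 ≤ RDPMF n β f a b u := by
  have hslope := slopeEnergy_nonneg (dlt n) (lowGrid_le_highGrid_sub (dlt_pos hn) hab) u
  have hfid := fidelity_nonneg f a b u
  rw [RDPMF_eq]
  positivity

theorem bddBelow_image_RDPMF (hn : 2 ≤ n) (hβ : 0 ≤ β) (f : ℝ → ℝ) (hab : a < b)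
    (A : Set (ℝ → ℝ)) : BddBelow (RDPMF n β f a b '' A) :=
  ⟨0, forall_mem_image.2 fun u _ => RDPMF_nonneg hn hβ f hab u⟩

theorem IsPC.RDPMF_mono (hu : IsPC (dlt n) u) (hn : 2 ≤ n) (hβ : 0 ≤ β)
    (hf : MemLp f 2 (volume.restrict (Ioo c d))) (hca : c ≤ a) (hab : a < b) (hbd : b ≤ d) :
    RDPMF n β f a b u ≤ RDPMF n β f c d u := by
  have hδ := dlt_pos hn
  have hslope := hu.slopeEnergy_mono hδ (lowGrid_mono hδ.le hca) (lowGrid_le_highGrid_sub hδ hab)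
    (sub_le_sub_right (highGrid_mono hδ.le hbd) (dlt n))
  have hfid := fidelity_mono ((hu.memLp_Ioo hδ 2 c d).sub hf) (Ioo_subset_Ioo hca hbd)
  rw [RDPMF_eq, RDPMF_eq]
  gcongr

theorem monotoneOn_muDisc (hn : 2 ≤ n) (hβ : 0 ≤ β) (M : ℝ) :
    MonotoneOn (fun L => muDisc n β L M) (Ioi 0) := by
  intro L₁ hL₁ L₂ _ hL
  refine sInf_image_le_sInf_image (bddBelow_image_RDPMF hn hβ _ hL₁ _) ⟨_, isPC_const _ 0⟩
    fun u hu => ⟨u, hu, ?_⟩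
  exact IsPC.RDPMF_mono hu hn hβ (memLp_linear_restrict_Ioo M 2 _ _) le_rfl hL₁ hL

theorem RDPMF_raiseLastCell_le (hu : IsPC (dlt n) u) (hn : 2 ≤ n) (hβ : 0 ≤ β) (hL : dlt n < L)
    (huL : u (highGrid (dlt n) L - dlt n) = M * L) :
    RDPMF n β (fun x => M * x) 0 (highGrid (dlt n) L) (raiseLastCell (dlt n) M L u) ≤
      RDPMF n β (fun x => M * x) 0 L u +
        (Real.log (2 * M ^ 2 + 2) / Real.log n + β * M ^ 2 * dlt n ^ 3 / 3) := by
  have hδ := dlt_pos hn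
  have hcells := le_highGrid_sub_of_lt hδ hL
  rw [RDPMF_eq, RDPMF_eq, lowGrid_zero, highGrid_highGrid hδ.ne']
  set δ := dlt n
  set a := highGrid δ L - δ
  calc 1 / omg n ^ 2 * slopeEnergy δ 0 a (raiseLastCell δ M L u) +
        β * fidelity (fun x => M * x) 0 (highGrid δ L) (raiseLastCell δ M L u)
      ≤ 1 / omg n ^ 2 * (slopeEnergy δ 0 a u + δ * Real.log (2 * M ^ 2 + 2)) +
        β * (fidelity (fun x => M * x) 0 L u + M ^ 2 * δ ^ 3 / 3) := by
        gcongr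
        · exact slopeEnergy_raiseLastCell_le hu hδ (sub_nonneg.2 hcells) huL
        · exact fidelity_raiseLastCell_le hu hδ (hδ.le.trans hcells) M
    _ = 1 / omg n ^ 2 * slopeEnergy δ 0 a u + β * fidelity (fun x => M * x) 0 L u +
        (δ / omg n ^ 2 * Real.log (2 * M ^ 2 + 2) + β * M ^ 2 * δ ^ 3 / 3) := by ring
    _ = 1 / omg n ^ 2 * slopeEnergy δ 0 a u + β * fidelity (fun x => M * x) 0 L u +
        (Real.log (2 * M ^ 2 + 2) / Real.log n + β * M ^ 2 * δ ^ 3 / 3) := by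
        rw [dlt_div_omg_sq, one_div_mul_eq_div (Real.log n)]

theorem muDiscStar_highGrid_le (hn : 2 ≤ n) (hβ : 0 ≤ β) (M : ℝ) (hL : dlt n < L) :
    muDiscStar n β (highGrid (dlt n) L) M ≤
      muDiscStar n β L M +
        (Real.log (2 * M ^ 2 + 2) / Real.log n + β * M ^ 2 * dlt n ^ 3 / 3) := by
  have hδ := dlt_pos hn
  have hlast : 0 < highGrid (dlt n) L - dlt n := hδ.trans_le (le_highGrid_sub_of_lt hδ hL)
  refine sInf_image_le_add (bddBelow_image_RDPMF hn hβ _ (by linarith) _) ?_ ?_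
  · exact ⟨overwriteFrom (highGrid (dlt n) L - dlt n) (M * L) fun _ => 0,
      isPC_overwriteFrom_highGrid_sub (isPC_const _ 0) hδ.le L _, overwriteFrom_of_lt hlast _ _,
      overwriteFrom_of_le le_rfl _ _⟩
  · rintro u ⟨hu, hu_zero, huL⟩
    refine ⟨raiseLastCell (dlt n) M L u, ⟨isPC_overwriteFrom_highGrid_sub hu hδ.le L _, ?_, ?_⟩,
      RDPMF_raiseLastCell_le hu hn hβ hL huL⟩
    · exact (overwriteFrom_of_lt hlast _ _).trans hu_zero
    · rw [highGrid_highGrid hδ.ne']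
      exact overwriteFrom_of_le le_rfl _ _

end Discrete

/-- The minimum values `μ_n`, `μ`, `μ*` are nondecreasing in the
length `L` on `(0,+∞)`; and `μ*_n` satisfies
`μ*_n(β,L^*_{δ(n)},M) ≤ μ*_n(β,L,M) + log(2M²+2)/log n + βM²δ(n)³/3` for `L > δ(n)`. -/
theorem mu_properties_in_L
    (n : ℕ) (hn : 2 ≤ n) (α β M : ℝ) (hα : 0 < α) (hβ : 0 < β) :
    MonotoneOn (fun L => muDisc n β L M) (Set.Ioi 0) ∧
    MonotoneOn (fun L => muLim α β L M) (Set.Ioi 0) ∧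
    MonotoneOn (fun L => muLimStar α β L M) (Set.Ioi 0) ∧
    ∀ L : ℝ, dlt n < L →
      muDiscStar n β (highGrid (dlt n) L) M ≤
        muDiscStar n β L M + Real.log (2 * M ^ 2 + 2) / Real.log n
          + β * M ^ 2 * dlt n ^ 3 / 3 :=
  ⟨monotoneOn_muDisc hn hβ.le M, (monotone_muLim hα.le hβ.le M).monotoneOn _,
    monotoneOn_muLimStar hα.le hβ.le M,
    fun _ hL => (muDiscStar_highGrid_le hn hβ.le M hL).trans_eq (add_assoc _ _ _).symm⟩

end PeronaMalik
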